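/- Let n ≥ 1 and let Γ = (E, V) be a graph. Let A be the unital ℂ-subalgebra of the algebra of continuous functions O(n)^E → ℂ generated by the Wilson loop functions g ↦ tr(h_l(g)) associated to all loops l in Γ (tr denotes the matrix trace of the natural n×n matrix representation). Then every continuous function f : O(n)^E → ℂ that is invariant under the action of O(n)^V (i.e. f(φ·g) = f(g) for all φ ∈ O(n)^V, g ∈ O(n)^E) lies in the closure of A with respect to the supremum norm. -/

import Mathlib

/-- The source of an oriented edge `(e, ε)` in the graph with source and target maps
`s, t : E → V`: for `ε = true` the edge is traversed forwards, for `ε = false` backwards. -/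
def edgeSrc {E V : Type*} (s t : E → V) (x : E × Bool) : V :=
  if x.2 then s x.1 else t x.1

/-- The target of an oriented edge `(e, ε)`. -/
def edgeTgt {E V : Type*} (s t : E → V) (x : E × Bool) : V :=
  if x.2 then t x.1 else s x.1

/-- `l` is a loop based at `v`: a nonempty composable sequence of oriented edges
starting and ending at `v`. -/
def IsLoopAt {E V : Type*} (s t : E → V) (v : V) (l : List (E × Bool)) : Prop :=
  ∃ hne : l ≠ [], l.Chain' (fun x y => edgeTgt s t x = edgeSrc s t y) ∧
    edgeSrc s t (l.head hne) = v ∧ edgeTgt s t (l.getLast hne) = v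

/-- The holonomy of a configuration `g : E → G` along `l = ((e₁,ε₁), …, (e_k,ε_k))`,
namely `g_{e_k}^{ε_k} ⋯ g_{e₁}^{ε₁}`. -/
def holonomy {E G : Type*} [Group G] (g : E → G) (l : List (E × Bool)) : G :=
  (l.reverse.map fun x => if x.2 then g x.1 else (g x.1)⁻¹).prod

/-- The gauge action of `φ : V → G` on a configuration `g : E → G`:
`(φ · g)_e = φ(t(e))⁻¹ * g_e * φ(s(e))`. -/
def gaugeAct {E V G : Type*} [Group G] (s t : E → V) (φ : V → G) (g : E → G) : E → G :=
  fun e => (φ (t e))⁻¹ * g e * φ (s e)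

open Matrix
open scoped MatrixOrder
theorem nonzero_intertwiner {n : ℕ}
    (A : Subalgebra ℝ (Matrix (Fin n) (Fin n) ℝ × Matrix (Fin n) (Fin n) ℝ))
    (hstar : ∀ x ∈ A, (x.1ᵀ, x.2ᵀ) ∈ A)
    (P Q : Matrix (Fin n) (Fin n) ℝ)
    (hPP : P * P = P) (hPt : Pᵀ = P) (hQQ : Q * Q = Q)
    (hPc : ∀ x ∈ A, P * x.1 = x.1 * P) (hQc : ∀ x ∈ A, Q * x.2 = x.2 * Q)
    (htr : ∀ x ∈ A, trace (x.1 * P) = trace (x.2 * Q)) (hP0 : P ≠ 0) :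
    ∃ T : Matrix (Fin n) (Fin n) ℝ, T ≠ 0 ∧ Q * T = T ∧ T * P = T ∧
      ∀ x ∈ A, x.2 * T = T * x.1 := by
  classical
  obtain ⟨v, hv⟩ : ∃ v, P *ᵥ v ≠ 0 := by
    by_contra! h
    exact hP0 (Matrix.ext_of_mulVec_single fun i => by rw [h, zero_mulVec])
  let β : LinearMap.BilinForm ℝ A := LinearMap.mk₂ ℝ
    (fun x y => trace (x.1.1ᵀ * y.1.1) + trace (x.1.2ᵀ * y.1.2))
    (by intro x y z; simp [add_mul]; ring)
    (by intro c x y; simp [mul_add])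
    (by intro x y z; simp [mul_add]; ring)
    (by intro c x y; simp [mul_add])
  have hβ : ∀ x y : A, β x y = trace (x.1.1ᵀ * y.1.1) + trace (x.1.2ᵀ * y.1.2) := fun _ _ => rfl
  have hnn : ∀ M : Matrix (Fin n) (Fin n) ℝ, 0 ≤ trace (Mᵀ * M) := fun M => by
    simpa using (Matrix.posSemidef_conjTranspose_mul_self M).trace_nonneg
  have hz : ∀ M : Matrix (Fin n) (Fin n) ℝ, trace (Mᵀ * M) = 0 → M = 0 := fun M h => by
    simpa using (Matrix.trace_conjTranspose_mul_self_eq_zero_iff (A := M)).1 (by simpa using h)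
  have hpos : ∀ x : A, β x x = 0 → x = 0 := by
    intro x hx
    rw [hβ] at hx
    have h1 := hnn x.1.1
    have h2 := hnn x.1.2
    ext1
    exact Prod.ext (hz _ (by linarith)) (hz _ (by linarith))
  have hnd : β.Nondegenerate := by
    constructor
    · intro x hx
      exact hpos x (hx x)
    · intro x hx
      exact hpos x (hx x)
  let Φ : (Fin n → ℝ) →ₗ[ℝ] Module.Dual ℝ A := LinearMap.mk₂ ℝ
    (fun x k => x ⬝ᵥ (k.1.1 *ᵥ (P *ᵥ v)))
    (by intro x y z; simp [add_dotProduct])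
    (by intro c x y; simp)
    (by intro x y z; simp [add_mulVec, -mulVec_mulVec])
    (by intro c x y; simp [smul_mulVec, -mulVec_mulVec])
  let Em : (Fin n → ℝ) →ₗ[ℝ] A := (β.toDual hnd).symm.toLinearMap ∘ₗ Φ
  have hE : ∀ x k, β (Em x) k = x ⬝ᵥ (k.1.1 *ᵥ (P *ᵥ v)) := by
    intro x k
    exact LinearMap.BilinForm.apply_toDual_symm_apply (hB := hnd) (Φ x) k
  have hinj : ∀ x y : A, (∀ k, β x k = β y k) → x = y := by
    intro x y h
    have := hpos (x - y) (by rw [LinearMap.BilinForm.sub_left, h, sub_self])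
    exact sub_eq_zero.1 this
  have heq : ∀ (a : A) x, Em (a.1.1 *ᵥ x) = a * Em x := by
    intro a x
    apply hinj
    intro k
    rw [hE]
    have := hE x (⟨_, hstar a.1 a.2⟩ * k)
    simp only [hβ] at this ⊢
    simp only [MulMemClass.coe_mul, Prod.fst_mul, Prod.snd_mul, transpose_mul, Matrix.mul_assoc] at this ⊢
    rw [this]
    simp only [← mulVec_mulVec]
    rw [dotProduct_mulVec x a.1.1ᵀ, vecMul_transpose]
  have hEP : ∀ x, Em (P *ᵥ x) = Em x := by
    intro x
    apply hinj
    intro k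
    rw [hE, hE]
    conv_rhs => rw [← hPP, ← mulVec_mulVec, mulVec_mulVec, ← hPc k.1 k.2, ← mulVec_mulVec, dotProduct_mulVec, ← mulVec_transpose, hPt]
  have hnz : (Em v).1.2 * Q ≠ 0 := by
    intro h0
    have h1 : trace (((Em v).1.1 * P)ᵀ * ((Em v).1.1 * P)) = 0 := by
      have h2 := htr _ (A.mul_mem (hstar _ (Em v).2) (Em v).2)
      simp only [Prod.fst_mul, Prod.snd_mul] at h2
      rw [Matrix.mul_assoc _ _ Q, h0, mul_zero, trace_zero] at h2
      rw [transpose_mul, hPt, ← Matrix.mul_assoc, trace_mul_comm, ← Matrix.mul_assoc, ← Matrix.mul_assoc, hPP,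
        Matrix.mul_assoc, trace_mul_comm, h2]
    have h2 := hz _ h1
    have h3 := hE v (Em v)
    rw [mulVec_mulVec, h2, zero_mulVec, dotProduct_zero] at h3
    have h4 := hpos _ h3
    have h5 := hE v 1
    rw [h4] at h5
    simp only [map_zero, LinearMap.zero_apply, OneMemClass.coe_one, Prod.fst_one, one_mulVec] at h5
    rw [← hPP, ← mulVec_mulVec, dotProduct_mulVec, ← mulVec_transpose, hPt] at h5
    exact hv (dotProduct_self_eq_zero.1 h5.symm)
  obtain ⟨w, hw⟩ : ∃ w, ((Em v).1.2 * Q) *ᵥ w ≠ 0 := by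
    by_contra! h
    exact hnz (Matrix.ext_of_mulVec_single fun i => by rw [h, zero_mulVec])
  let L : (Fin n → ℝ) →ₗ[ℝ] (Fin n → ℝ) :=
    { toFun := fun x => (Em x).1.2 *ᵥ (Q *ᵥ w)
      map_add' := by intro x y; simp [add_mulVec, -mulVec_mulVec]
      map_smul' := by intro c x; simp [smul_mulVec, -mulVec_mulVec] }
  have hL : ∀ x, LinearMap.toMatrix' L *ᵥ x = (Em x).1.2 *ᵥ (Q *ᵥ w) := by
    intro x
    rw [LinearMap.toMatrix'_mulVec]; rfl
  have hext : ∀ M N : Matrix (Fin n) (Fin n) ℝ, (∀ x, M *ᵥ x = N *ᵥ x) → M = N := fun M N h =>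
    Matrix.ext_of_mulVec_single fun i => h _
  refine ⟨LinearMap.toMatrix' L, ?_, ?_, ?_, ?_⟩
  · intro h
    apply hw
    rw [← mulVec_mulVec, ← hL, h, zero_mulVec]
  · apply hext
    intro x
    rw [← mulVec_mulVec, hL, mulVec_mulVec, hQc _ (Em x).2, ← mulVec_mulVec, mulVec_mulVec _ Q, hQQ]
  · apply hext
    intro x
    rw [← mulVec_mulVec, hL, hL, hEP]
  · intro a ha
    apply hext
    intro x
    rw [← mulVec_mulVec, ← mulVec_mulVec, hL, hL, heq ⟨a, ha⟩ x]
    simp [-mulVec_mulVec]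
    rw [mulVec_mulVec]

theorem partial_isometry_of_intertwiner {n : ℕ}
    (A : Subalgebra ℝ (Matrix (Fin n) (Fin n) ℝ × Matrix (Fin n) (Fin n) ℝ))
    (hstar : ∀ x ∈ A, (x.1ᵀ, x.2ᵀ) ∈ A)
    (P Q T : Matrix (Fin n) (Fin n) ℝ)
    (hT : T ≠ 0) (hQT : Q * T = T) (hTP : T * P = T)
    (hTx : ∀ x ∈ A, x.2 * T = T * x.1) :
    ∃ v : Matrix (Fin n) (Fin n) ℝ, v ≠ 0 ∧ v * vᵀ * v = v ∧ Q * v = v ∧ v * P = v ∧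
      ∀ x ∈ A, x.2 * v = v * x.1 := by
  set S := Tᵀ * T with hS
  have hSpsd : S.PosSemidef := by simpa using Matrix.posSemidef_conjTranspose_mul_self T
  have hSsa : IsSelfAdjoint S := hSpsd.isHermitian
  have hcont : ∀ f : ℝ → ℝ, ContinuousOn f (spectrum ℝ S) := fun f =>
    (Matrix.finite_real_spectrum).continuousOn f
  have hnonneg : ∀ s ∈ spectrum ℝ S, 0 ≤ s := by
    intro s hs
    exact spectrum_nonneg_of_nonneg hSpsd.nonneg hs
  have hmul : ∀ f g : ℝ → ℝ, cfc f S * cfc g S = cfc (fun x => f x * g x) S := fun f g =>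
    (cfc_mul f g S (hcont f) (hcont g)).symm
  have hid : cfc (fun x : ℝ => x) S = S := cfc_id' ℝ S
  set F := cfc (fun x : ℝ => (√x)⁻¹) S with hF
  have hFt : Fᵀ = F := by
    have : IsSelfAdjoint F := cfc_predicate _ S
    have h := this.star_eq
    rwa [star_eq_conjTranspose, conjTranspose_eq_transpose_of_trivial] at h
  have hr : ∀ s ∈ spectrum ℝ S, s = 0 ∨ (0 < √s ∧ s = √s * √s) := by
    intro s hs
    rcases (hnonneg s hs).eq_or_lt with h | h
    · exact Or.inl h.symm
    · exact Or.inr ⟨Real.sqrt_pos.2 h, (Real.mul_self_sqrt h.le).symm⟩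
  have h1 : F * F * S * F = F := by
    conv_lhs => rw [← hid, hF, hmul, hmul, hmul]
    apply cfc_congr
    intro s hs
    rcases hr s hs with h | ⟨h, h'⟩
    · simp [h]
    · simp only
      rw [mul_assoc _ s, mul_comm s, ← mul_assoc]
      nth_rw 4 [h']
      field_simp
  have h2 : F * F * F * S = F := by
    conv_lhs => rw [← hid, hF, hmul, hmul, hmul]
    apply cfc_congr
    intro s hs
    rcases hr s hs with h | ⟨h, h'⟩
    · simp [h]
    · simp only
      nth_rw 4 [h']
      field_simp
  have h3 : F * F * S * S = S := by
    conv_lhs => rw [← hid, hF, hmul, hmul, hmul]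
    conv_rhs => rw [← hid]
    apply cfc_congr
    intro s hs
    rcases hr s hs with h | ⟨h, h'⟩
    · simp [h]
    · simp only
      nth_rw 3 [h']
      field_simp
  have hcF : ∀ g : Matrix (Fin n) (Fin n) ℝ, S * g = g * S → F * g = g * F := fun g hg =>
    IsSelfAdjoint.commute_cfc hSsa (show Commute S g from hg) _
  refine ⟨T * F, ?_, ?_, ?_, ?_, ?_⟩
  · intro h
    apply hT
    have h4 : S * F = 0 := by rw [hS, Matrix.mul_assoc, h, mul_zero]
    have h5 : S = 0 := by
      rw [← h3, Matrix.mul_assoc F, hcF S rfl, h4]; simp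
    have := (Matrix.conjTranspose_mul_self_eq_zero (A := T)).1 (by simpa [hS] using h5)
    exact this
  · rw [transpose_mul, hFt]
    calc T * F * (F * Tᵀ) * (T * F) = T * (F * F * S * F) := by rw [hS]; noncomm_ring
      _ = T * F := by rw [h1]
  · rw [← Matrix.mul_assoc, hQT]
  · rw [← h2, Matrix.mul_assoc, Matrix.mul_assoc _ S, hS, Matrix.mul_assoc Tᵀ, hTP]
  · intro x hx
    have h6 : S * x.1 = x.1 * S := by
      have := congrArg transpose (hTx _ (hstar x hx))
      simp only [transpose_mul, transpose_transpose] at this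
      rw [hS, Matrix.mul_assoc, ← hTx x hx, ← Matrix.mul_assoc, this, Matrix.mul_assoc]
    rw [← Matrix.mul_assoc, hTx x hx, Matrix.mul_assoc, ← hcF _ h6, Matrix.mul_assoc]

theorem exists_orthogonal_intertwiner {n : ℕ}
    (A : Subalgebra ℝ (Matrix (Fin n) (Fin n) ℝ × Matrix (Fin n) (Fin n) ℝ))
    (hstar : ∀ x ∈ A, (x.1ᵀ, x.2ᵀ) ∈ A)
    (htr : ∀ x ∈ A, trace x.1 = trace x.2) :
    ∃ U : Matrix (Fin n) (Fin n) ℝ, Uᵀ * U = 1 ∧ ∀ x ∈ A, x.2 * U = U * x.1 := by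
  let good : Set (Matrix (Fin n) (Fin n) ℝ) :=
    {u | u * uᵀ * u = u ∧ ∀ x ∈ A, x.2 * u = u * x.1}
  have hne : good.Nonempty := ⟨0, by simp [good]⟩
  obtain ⟨u, ⟨hu, hux⟩, hmin⟩ := (measure fun u : Matrix (Fin n) (Fin n) ℝ =>
    Module.finrank ℝ (LinearMap.ker u.mulVecLin)).wf.has_min good hne
  refine ⟨u, ?_, hux⟩
  have hxu : ∀ x ∈ A, uᵀ * x.2 = x.1 * uᵀ := by
    intro x hx
    have := congrArg transpose (hux _ (hstar x hx))
    simpa only [transpose_mul, transpose_transpose] using this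
  have hut : uᵀ * u * uᵀ = uᵀ := by
    have := congrArg transpose hu
    simpa only [transpose_mul, transpose_transpose, Matrix.mul_assoc] using this
  by_contra hP
  set P := 1 - uᵀ * u with hPdef
  set Q := 1 - u * uᵀ with hQdef
  have hPt : Pᵀ = P := by simp [hPdef]
  have huP : u * P = 0 := by rw [hPdef, mul_sub, mul_one, ← Matrix.mul_assoc, hu, sub_self]
  have huQ : uᵀ * Q = 0 := by rw [hQdef, mul_sub, mul_one, ← Matrix.mul_assoc, hut, sub_self]
  obtain ⟨T, hT, hQT, hTP, hTx⟩ := nonzero_intertwiner A hstar P Q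
    (by nth_rw 1 [hPdef]; rw [sub_mul, Matrix.mul_assoc, huP]; simp) hPt
    (by nth_rw 1 [hQdef]; rw [sub_mul, Matrix.mul_assoc, huQ]; simp)
    (fun x hx => by
      rw [hPdef, sub_mul, mul_sub, Matrix.mul_assoc, ← hux x hx, ← Matrix.mul_assoc, hxu x hx,
        Matrix.mul_assoc]; simp)
    (fun x hx => by
      rw [hQdef, sub_mul, mul_sub, Matrix.mul_assoc, hxu x hx, ← Matrix.mul_assoc, ← hux x hx,
        Matrix.mul_assoc]; simp)
    (fun x hx => by
      rw [hPdef, hQdef, mul_sub, mul_sub, trace_sub, trace_sub, mul_one, mul_one, htr x hx,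
        ← Matrix.mul_assoc x.2, hux x hx, Matrix.mul_assoc u, trace_mul_comm u, Matrix.mul_assoc])
    (fun h => hP (sub_eq_zero.1 h).symm)
  obtain ⟨v, hv0, hv, hQv, hvP, hvx⟩ :=
    partial_isometry_of_intertwiner A hstar P Q T hT hQT hTP hTx
  have huv : uᵀ * v = 0 := by rw [← hQv, ← Matrix.mul_assoc, huQ, zero_mul]
  have huv' : u * vᵀ = 0 := by
    rw [← hvP, transpose_mul, hPt, ← Matrix.mul_assoc, huP, zero_mul]
  have hvu : vᵀ * u = 0 := by
    have := congrArg transpose huv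
    simpa only [transpose_mul, transpose_transpose, transpose_zero] using this
  have hvu' : v * uᵀ = 0 := by
    have := congrArg transpose huv'
    simpa only [transpose_mul, transpose_transpose, transpose_zero] using this
  refine hmin (u + v) ⟨?_, ?_⟩ ?_
  · have e1 : (u + v) * (u + v)ᵀ = u * uᵀ + v * vᵀ := by
      rw [transpose_add, add_mul, mul_add, mul_add, huv', hvu', add_zero, zero_add]
    rw [e1, add_mul, mul_add, mul_add, hu, hv, Matrix.mul_assoc u, huv, Matrix.mul_assoc v, hvu]
    simp
  · intro x hx
    rw [mul_add, add_mul, hux x hx, hvx x hx]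
  · change Module.finrank ℝ (LinearMap.ker (u + v).mulVecLin) <
      Module.finrank ℝ (LinearMap.ker u.mulVecLin)
    apply Submodule.finrank_lt_finrank_of_lt
    refine lt_of_le_of_ne ?_ ?_
    · intro x hx
      rw [LinearMap.mem_ker, mulVecLin_apply] at hx ⊢
      rw [← hu, Matrix.mul_assoc]
      have : uᵀ * u = uᵀ * (u + v) := by rw [mul_add, huv, add_zero]
      rw [this, ← mulVec_mulVec, ← mulVec_mulVec, hx]; simp
    · intro h
      apply hv0
      rw [← hv]
      have : v * vᵀ = 0 := by
        apply Matrix.ext_of_mulVec_single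
        intro i
        have hk : vᵀ *ᵥ Pi.single i 1 ∈ LinearMap.ker u.mulVecLin := by
          rw [LinearMap.mem_ker, mulVecLin_apply, mulVec_mulVec, huv', zero_mulVec]
        rw [← h, LinearMap.mem_ker, mulVecLin_apply, mulVec_mulVec, add_mul, huv', zero_add] at hk
        rw [hk, zero_mulVec]
      rw [this, zero_mul]

/-- `l` is a (possibly empty) path from `u` to `v`. -/
def IsPth {E V : Type*} (s t : E → V) : V → List (E × Bool) → V → Prop
  | u, [], v => u = v
  | u, x :: l, v => edgeSrc s t x = u ∧ IsPth s t (edgeTgt s t x) l v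

/-- The reversed path. -/
def pthInv {E : Type*} (l : List (E × Bool)) : List (E × Bool) :=
  l.reverse.map fun x => (x.1, !x.2)

section paths
variable {E V G : Type*} [Group G] (s t : E → V)

theorem IsPth.append {u v w : V} {l m : List (E × Bool)} (h : IsPth s t u l v)
    (h' : IsPth s t v m w) : IsPth s t u (l ++ m) w := by
  induction l generalizing u with
  | nil => cases h; exact h'
  | cons x l ih => exact ⟨h.1, ih h.2⟩

theorem IsPth.inv {u v : V} {l : List (E × Bool)} (h : IsPth s t u l v) :
    IsPth s t v (pthInv l) u := by
  induction l generalizing u with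
  | nil => exact Eq.symm h
  | cons x l ih =>
    have h2 := ih h.2
    have h3 : IsPth s t (edgeTgt s t x) [(x.1, !x.2)] u := by
      refine ⟨?_, ?_⟩
      · rcases x with ⟨e, _ | _⟩ <;> simp [edgeSrc, edgeTgt]
      · have := h.1
        change _ = u
        rw [← this]
        rcases x with ⟨e, _ | _⟩ <;> simp [edgeSrc, edgeTgt]
    have := IsPth.append s t h2 h3
    simpa [pthInv] using this

theorem holonomy_nil (g : E → G) : holonomy g [] = 1 := by simp [holonomy]

theorem holonomy_append (g : E → G) (l m : List (E × Bool)) :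
    holonomy g (l ++ m) = holonomy g m * holonomy g l := by
  simp [holonomy]

theorem holonomy_cons (g : E → G) (x : E × Bool) (l : List (E × Bool)) :
    holonomy g (x :: l) = holonomy g l * (if x.2 then g x.1 else (g x.1)⁻¹) := by
  simp [holonomy]

theorem holonomy_inv (g : E → G) (l : List (E × Bool)) :
    holonomy g (pthInv l) = (holonomy g l)⁻¹ := by
  induction l with
  | nil => simp [pthInv, holonomy_nil]
  | cons x l ih =>
    have : pthInv (x :: l) = pthInv l ++ [(x.1, !x.2)] := by simp [pthInv]
    rw [this, holonomy_append, ih, holonomy_cons, holonomy_cons, holonomy_nil, _root_.mul_inv_rev]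
    rcases x with ⟨e, _ | _⟩ <;> simp

theorem IsPth.chain {u v : V} {x : E × Bool} {l : List (E × Bool)} (h : IsPth s t u (x :: l) v) :
    (x :: l).IsChain (fun x y => edgeTgt s t x = edgeSrc s t y) ∧
      edgeTgt s t ((x :: l).getLast (List.cons_ne_nil _ _)) = v := by
  induction l generalizing u x with
  | nil => exact ⟨by simp, h.2⟩
  | cons y l ih =>
    obtain ⟨h1, h2⟩ := ih h.2
    refine ⟨List.isChain_cons_cons.2 ⟨h.2.1.symm, h1⟩, ?_⟩
    rw [List.getLast_cons_cons]
    exact h2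

theorem IsPth.isLoopAt {v : V} {l : List (E × Bool)} (hl : l ≠ []) (h : IsPth s t v l v) :
    IsLoopAt s t v l := by
  cases l with
  | nil => exact absurd rfl hl
  | cons x l => exact ⟨hl, h.chain.1, h.1, h.chain.2⟩

end paths

theorem exists_conj_of_traces {n : ℕ} {E V : Type*} (s t : E → V)
    (g g' : E → Matrix.orthogonalGroup (Fin n) ℝ)
    (htr : ∀ v l, IsLoopAt s t v l → trace (holonomy g l).1 =
      trace (holonomy g' l).1) (v : V) :
    ∃ U : Matrix.orthogonalGroup (Fin n) ℝ, ∀ l, IsPth s t v l v →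
      holonomy g' l * U = U * holonomy g l := by
  have htr' : ∀ l, IsPth s t v l v → trace (holonomy g l).1 =
      trace (holonomy g' l).1 := by
    intro l hl
    by_cases h : l = []
    · subst h; simp [holonomy_nil]
    · exact htr v l (IsPth.isLoopAt s t h hl)
  let S : Submonoid (Matrix (Fin n) (Fin n) ℝ × Matrix (Fin n) (Fin n) ℝ) :=
    { carrier := {x | ∃ l, IsPth s t v l v ∧ x = ((holonomy g l).1, (holonomy g' l).1)}
      one_mem' := ⟨[], rfl, by simp only [holonomy_nil]; rfl⟩
      mul_mem' := by
        rintro _ _ ⟨l, hl, rfl⟩ ⟨m, hm, rfl⟩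
        exact ⟨m ++ l, IsPth.append s t hm hl, by simp [holonomy_append]⟩ }
  have hspan : ∀ x, x ∈ Algebra.adjoin ℝ (S : Set (Matrix (Fin n) (Fin n) ℝ × Matrix (Fin n) (Fin n) ℝ)) ↔ x ∈ Submodule.span ℝ (S : Set (Matrix (Fin n) (Fin n) ℝ × Matrix (Fin n) (Fin n) ℝ)) := by
    intro x
    rw [← Subalgebra.mem_toSubmodule, Algebra.adjoin_eq_span, Submonoid.closure_eq]
  obtain ⟨U, hU, hUx⟩ := exists_orthogonal_intertwiner (Algebra.adjoin ℝ (S : Set (Matrix (Fin n) (Fin n) ℝ × Matrix (Fin n) (Fin n) ℝ)))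
    (by
      intro x hx
      rw [hspan] at hx ⊢
      induction hx using Submodule.span_induction with
      | mem x hx =>
        obtain ⟨l, hl, rfl⟩ := hx
        apply Submodule.subset_span
        refine ⟨pthInv l, IsPth.inv s t hl, ?_⟩
        rw [holonomy_inv, holonomy_inv]
        rfl
      | zero => exact Submodule.zero_mem (Submodule.span ℝ (S : Set (Matrix (Fin n) (Fin n) ℝ × Matrix (Fin n) (Fin n) ℝ)))
      | add x y _ _ hx hy => simpa using Submodule.add_mem _ hx hy
      | smul c x _ hx => simpa using Submodule.smul_mem _ c hx)
    (by
      intro x hx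
      rw [hspan] at hx
      induction hx using Submodule.span_induction with
      | mem x hx =>
        obtain ⟨l, hl, rfl⟩ := hx
        exact htr' l hl
      | zero => simp
      | add x y _ _ hx hy => simp [hx, hy]
      | smul c x _ hx => simp [hx])
  refine ⟨⟨U, (Matrix.mem_orthogonalGroup_iff' _ _).2 hU⟩, fun l hl => ?_⟩
  apply Subtype.ext
  exact hUx _ (Algebra.subset_adjoin ⟨l, hl, rfl⟩)

theorem exists_gauge_of_traces {n : ℕ} {E V : Type*} (s t : E → V)
    (g g' : E → Matrix.orthogonalGroup (Fin n) ℝ)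
    (htr : ∀ v l, IsLoopAt s t v l → trace (holonomy g l).1 =
      trace (holonomy g' l).1) :
    ∃ φ : V → Matrix.orthogonalGroup (Fin n) ℝ, gaugeAct s t φ g = g' := by
  choose U hU using exists_conj_of_traces s t g g' htr
  let conn : Setoid V :=
    { r := fun u v => ∃ l, IsPth s t u l v
      iseqv := ⟨fun u => ⟨[], rfl⟩, fun ⟨l, hl⟩ => ⟨_, IsPth.inv s t hl⟩,
        fun ⟨l, hl⟩ ⟨m, hm⟩ => ⟨_, IsPth.append s t hl hm⟩⟩ }
  let b : V → V := fun v => (Quotient.mk conn v).out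
  have hb : ∀ v, ∃ l, IsPth s t (b v) l v := fun v => Quotient.mk_out (s := conn) v
  choose p hp using hb
  have hbe : ∀ e, b (s e) = b (t e) := by
    intro e
    have : Quotient.mk conn (s e) = Quotient.mk conn (t e) :=
      Quotient.sound ⟨[(e, true)], rfl, rfl⟩
    simp only [b, this]
  refine ⟨fun u => holonomy g (p u) * (U (b u))⁻¹ * (holonomy g' (p u))⁻¹, ?_⟩
  funext e
  have hl : IsPth s t (b (t e)) (p (s e) ++ ([(e, true)] ++ pthInv (p (t e)))) (b (t e)) := by
    have h1 := hp (s e)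
    rw [hbe e] at h1
    have h2 : IsPth s t (s e) [(e, true)] (t e) := ⟨rfl, rfl⟩
    exact IsPth.append s t h1 (IsPth.append s t h2 (IsPth.inv s t (hp (t e))))
  have := hU _ _ hl
  simp only [holonomy_append, holonomy_inv, holonomy_cons, holonomy_nil, if_true, one_mul] at this
  simp only [gaugeAct, hbe e]
  generalize holonomy g (p (s e)) = a at *
  generalize holonomy g (p (t e)) = c at *
  generalize holonomy g' (p (s e)) = a' at *
  generalize holonomy g' (p (t e)) = c' at *
  generalize U (b (t e)) = u at *
  have h3 : u * (c⁻¹ * g e * a) * u⁻¹ = c'⁻¹ * g' e * a' := by rw [← this]; group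
  calc _ = c' * (u * (c⁻¹ * g e * a) * u⁻¹) * a'⁻¹ := by group
    _ = g' e := by rw [h3]; group

theorem compactSpace_orthogonalGroup (n : ℕ) :
    CompactSpace (Matrix.orthogonalGroup (Fin n) ℝ) := by
  refine isCompact_iff_compactSpace.1
    (?_ : IsCompact {M : Matrix (Fin n) (Fin n) ℝ | M ∈ Matrix.orthogonalGroup (Fin n) ℝ})
  have hK : IsCompact (Set.pi Set.univ fun _ : Fin n => Set.pi Set.univ fun _ : Fin n =>
    Set.Icc (-1 : ℝ) 1) := isCompact_univ_pi fun _ => isCompact_univ_pi fun _ => isCompact_Icc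
  refine hK.of_isClosed_subset ?_ ?_
  · have : {M : Matrix (Fin n) (Fin n) ℝ | M ∈ Matrix.orthogonalGroup (Fin n) ℝ} =
        {M | M * Mᵀ = 1} := by
      ext M; exact Matrix.mem_orthogonalGroup_iff _ _
    rw [this]
    exact isClosed_eq (by fun_prop) continuous_const
  · intro M hM i _ j _
    have := entry_norm_bound_of_unitary (𝕜 := ℝ) hM i j
    rw [Real.norm_eq_abs] at this
    exact abs_le.1 this

theorem continuous_holonomy {n : ℕ} {E : Type*} (l : List (E × Bool)) :
    Continuous fun g : E → Matrix.orthogonalGroup (Fin n) ℝ =>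
      (holonomy g l).1 := by
  induction l with
  | nil => simpa [holonomy_nil] using continuous_const
  | cons x l ih =>
    simp only [holonomy_cons, Submonoid.coe_mul]
    refine ih.mul ?_
    rcases x with ⟨e, _ | _⟩
    · simp only [Bool.false_eq_true, if_false]
      change Continuous fun g : E → Matrix.orthogonalGroup (Fin n) ℝ =>
        star (g e : Matrix (Fin n) (Fin n) ℝ)
      exact (continuous_subtype_val.comp (continuous_apply e)).star
    · simp only [if_true]
      exact continuous_subtype_val.comp (continuous_apply e)

/-- **Density of Wilson loops for `O(n)` lattice gauge theory.** Every continuous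
gauge-invariant function on the configuration space `O(n)^E` of a graph lies in the
uniform closure of the algebra generated by the Wilson loops `g ↦ tr(h_l(g))`. -/
theorem wilson_loops_dense_orthogonal
    (n : ℕ) (hn : 1 ≤ n)
    {E V : Type} [Fintype E] [Fintype V] (s t : E → V)
    (W : Set C((E → Matrix.orthogonalGroup (Fin n) ℝ), ℂ))
    (hWdef : W = {F | ∃ (v : V) (l : List (E × Bool)), IsLoopAt s t v l ∧
      ∀ g : E → Matrix.orthogonalGroup (Fin n) ℝ,
        F g = ((Matrix.trace ((holonomy g l : Matrix.orthogonalGroup (Fin n) ℝ) :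
          Matrix (Fin n) (Fin n) ℝ) : ℝ) : ℂ)})
    (f : C((E → Matrix.orthogonalGroup (Fin n) ℝ), ℂ))
    (hf : ∀ (φ : V → Matrix.orthogonalGroup (Fin n) ℝ)
      (g : E → Matrix.orthogonalGroup (Fin n) ℝ), f (gaugeAct s t φ g) = f g) :
    f ∈ closure ((Algebra.adjoin ℂ W :
      Subalgebra ℂ C((E → Matrix.orthogonalGroup (Fin n) ℝ), ℂ)) :
      Set C((E → Matrix.orthogonalGroup (Fin n) ℝ), ℂ)) := by
  have := compactSpace_orthogonalGroup n
  -- the quotient by the relation that all Wilson loops agree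
  let r : Setoid (E → Matrix.orthogonalGroup (Fin n) ℝ) :=
    { r := fun g g' => ∀ v l, IsLoopAt s t v l →
        trace (holonomy g l).1 =
          trace (holonomy g' l).1
      iseqv := ⟨fun _ _ _ _ => rfl, fun h v l hl => (h v l hl).symm,
        fun h h' v l hl => (h v l hl).trans (h' v l hl)⟩ }
  let π : C((E → Matrix.orthogonalGroup (Fin n) ℝ), Quotient r) :=
    ⟨Quotient.mk r, continuous_quotient_mk'⟩
  let fbar : C(Quotient r, ℂ) := ⟨Quotient.lift f (by
    intro g g' h
    obtain ⟨φ, hφ⟩ := exists_gauge_of_traces s t g g' h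
    rw [← hφ, hf]), f.continuous.quotient_lift _⟩
  let Wbar : Set C(Quotient r, ℂ) := {F | F.comp π ∈ W}
  have hstar : ∀ F ∈ Wbar, star F = F := by
    intro F hF
    have hF' : F.comp π ∈ W := hF
    rw [hWdef] at hF'
    obtain ⟨v, l, hl, h⟩ := hF'
    ext q
    induction q using Quotient.inductionOn with
    | h g =>
      have h1 : F (Quotient.mk r g) = _ := h g
      rw [ContinuousMap.star_apply, h1]
      simp
  let B : StarSubalgebra ℂ C(Quotient r, ℂ) :=
    { Algebra.adjoin ℂ Wbar with
      star_mem' := by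
        intro a ha
        change a ∈ Algebra.adjoin ℂ Wbar at ha
        change star a ∈ Algebra.adjoin ℂ Wbar
        induction ha using Algebra.adjoin_induction with
        | mem x hx => rw [hstar x hx]; exact Algebra.subset_adjoin hx
        | algebraMap c => rw [← algebraMap_star_comm]; exact Subalgebra.algebraMap_mem _ _
        | add x y _ _ hx hy => rw [star_add]; exact add_mem hx hy
        | mul x y _ _ hx hy => rw [star_mul]; exact mul_mem hy hx }
  have hsep : B.SeparatesPoints := by
    intro x y
    induction x using Quotient.inductionOn with
    | h g =>
    induction y using Quotient.inductionOn with
    | h g' =>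
    intro hne
    have : ¬ ∀ v l, IsLoopAt s t v l →
        trace (holonomy g l).1 =
          trace (holonomy g' l).1 := fun h => hne (Quotient.sound h)
    push Not at this
    obtain ⟨v, l, hl, hlne⟩ := this
    have hc : Continuous fun g : E → Matrix.orthogonalGroup (Fin n) ℝ =>
        ((trace (holonomy g l).1 : ℝ) : ℂ) :=
      Complex.continuous_ofReal.comp (continuous_holonomy l).matrix_trace
    let F : C(Quotient r, ℂ) := ⟨Quotient.lift _ (by
      intro a b hab
      exact congrArg _ (hab v l hl)), hc.quotient_lift _⟩
    have hF : F ∈ Wbar := by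
      change F.comp π ∈ W
      rw [hWdef]
      exact ⟨v, l, hl, fun g => rfl⟩
    refine ⟨F, ⟨F, Algebra.subset_adjoin hF, rfl⟩, ?_⟩
    intro h
    exact hlne (Complex.ofReal_injective h)
  have htop := ContinuousMap.starSubalgebra_topologicalClosure_eq_top_of_separatesPoints B hsep
  have hmem : fbar ∈ closure (B : Set C(Quotient r, ℂ)) := by
    have : fbar ∈ B.topologicalClosure := by rw [htop]; trivial
    exact this
  have hcomp : fbar.comp π = f := by ext g; rfl
  rw [← hcomp]
  refine map_mem_closure (f := fun F : C(Quotient r, ℂ) => F.comp π)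
    (ContinuousMap.continuous_precomp π) hmem ?_
  intro a ha
  change a ∈ Algebra.adjoin ℂ Wbar at ha
  change a.comp π ∈ Algebra.adjoin ℂ W
  induction ha using Algebra.adjoin_induction with
  | mem x hx => exact Algebra.subset_adjoin hx
  | algebraMap c => exact Subalgebra.algebraMap_mem (Algebra.adjoin ℂ W) c
  | add x y _ _ hx hy => exact add_mem hx hy
  | mul x y _ _ hx hy => exact mul_mem hx hy
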